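/- For a Cartesian reverse differential category X, the operation f ↦ f† := ι₁R[f], restricted to the subcategory Lin(X) of maps linear with respect to the induced differential combinator, is a contravariant involutive identity-on-objects functor making Lin(X) a dagger category with dagger biproducts (πᵢ† = ιᵢ). In particular, for linear f : A → B and linear g : B → C, (fg)† = g†f†, 1† = 1, and f†† = f. -/

import Mathlib

universe u v

/-- A Cartesian left additive category, with composition written in diagrammatic order:
`comp f g` is "`f` followed by `g`". -/
structure CLACat where
  Obj : Type u
  Hom : Obj → Obj → Type v
  id : ∀ A, Hom A A
  comp : ∀ {A B C}, Hom A B → Hom B C → Hom A C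
  id_comp : ∀ {A B} (f : Hom A B), comp (id A) f = f
  comp_id : ∀ {A B} (f : Hom A B), comp f (id B) = f
  assoc : ∀ {A B C D} (f : Hom A B) (g : Hom B C) (h : Hom C D),
    comp (comp f g) h = comp f (comp g h)
  /-- chosen binary product on objects -/
  prod : Obj → Obj → Obj
  /-- first projection -/
  p0 : ∀ {A B}, Hom (prod A B) A
  /-- second projection -/
  p1 : ∀ {A B}, Hom (prod A B) B
  /-- pairing -/
  pair : ∀ {C A B}, Hom C A → Hom C B → Hom C (prod A B)
  pair_p0 : ∀ {C A B} (f : Hom C A) (g : Hom C B), comp (pair f g) p0 = f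
  pair_p1 : ∀ {C A B} (f : Hom C A) (g : Hom C B), comp (pair f g) p1 = g
  pair_unique : ∀ {C A B} (h : Hom C (prod A B)), pair (comp h p0) (comp h p1) = h
  /-- chosen terminal object -/
  one : Obj
  bang : ∀ A, Hom A one
  bang_unique : ∀ {A} (f : Hom A one), f = bang A
  /-- commutative monoid structure on each hom-set -/
  add : ∀ {A B}, Hom A B → Hom A B → Hom A B
  zero : ∀ {A B}, Hom A B
  add_assoc' : ∀ {A B} (f g h : Hom A B), add (add f g) h = add f (add g h)
  add_comm' : ∀ {A B} (f g : Hom A B), add f g = add g f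
  add_zero' : ∀ {A B} (f : Hom A B), add f zero = f
  /-- composition on the left preserves addition -/
  comp_add : ∀ {A B C} (x : Hom A B) (f g : Hom B C),
    comp x (add f g) = add (comp x f) (comp x g)
  comp_zero : ∀ {A B C} (x : Hom A B), comp x (zero : Hom B C) = (zero : Hom A C)
  /-- projections are additive -/
  add_comp_p0 : ∀ {C A B} (f g : Hom C (prod A B)),
    comp (add f g) p0 = add (comp f p0) (comp g p0)
  zero_comp_p0 : ∀ {C A B}, comp (zero : Hom C (prod A B)) p0 = (zero : Hom C A)
  add_comp_p1 : ∀ {C A B} (f g : Hom C (prod A B)),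
    comp (add f g) p1 = add (comp f p1) (comp g p1)
  zero_comp_p1 : ∀ {C A B}, comp (zero : Hom C (prod A B)) p1 = (zero : Hom C B)

namespace CLACat

variable (X : CLACat)

/-- first injection ι₀ := ⟨1,0⟩ : A → A×B -/
def i0 {A B : X.Obj} : X.Hom A (X.prod A B) := X.pair (X.id A) X.zero

/-- second injection ι₁ := ⟨0,1⟩ : B → A×B -/
def i1 {A B : X.Obj} : X.Hom B (X.prod A B) := X.pair X.zero (X.id B)

/-- the product map h×k -/
def prodMap {A B C D : X.Obj} (h : X.Hom A B) (k : X.Hom C D) :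
    X.Hom (X.prod A C) (X.prod B D) :=
  X.pair (X.comp X.p0 h) (X.comp X.p1 k)

/-- the exchange isomorphism ex := ⟨π₀×π₀, π₁×π₁⟩ -/
def ex {A B C D : X.Obj} :
    X.Hom (X.prod (X.prod A B) (X.prod C D)) (X.prod (X.prod A C) (X.prod B D)) :=
  X.pair (X.prodMap X.p0 X.p0) (X.prodMap X.p1 X.p1)

/-- a map is additive when precomposition with it preserves the additive structure -/
def Additive {A B : X.Obj} (h : X.Hom A B) : Prop :=
  (∀ {C : X.Obj} (x y : X.Hom C A), X.comp (X.add x y) h = X.add (X.comp x h) (X.comp y h)) ∧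
  (∀ {C : X.Obj}, X.comp (X.zero : X.Hom C A) h = X.zero)

end CLACat
/-- The axioms of a Cartesian differential category, for a differential combinator `D`
on a Cartesian left additive category `X`. -/
structure CDCAxioms (X : CLACat)
    (D : ∀ {A B : X.Obj}, X.Hom A B → X.Hom (X.prod A A) B) : Prop where
  cdc1_add : ∀ {A B} (f g : X.Hom A B), D (X.add f g) = X.add (D f) (D g)
  cdc1_zero : ∀ {A B}, D (X.zero : X.Hom A B) = X.zero
  cdc2_add : ∀ {C A B} (a b c : X.Hom C A) (f : X.Hom A B),
    X.comp (X.pair a (X.add b c)) (D f)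
      = X.add (X.comp (X.pair a b) (D f)) (X.comp (X.pair a c) (D f))
  cdc2_zero : ∀ {C A B} (a : X.Hom C A) (f : X.Hom A B),
    X.comp (X.pair a X.zero) (D f) = X.zero
  cdc3_id : ∀ {A}, D (X.id A) = X.p1
  cdc3_p0 : ∀ {A B}, D (X.p0 : X.Hom (X.prod A B) A) = X.comp X.p1 X.p0
  cdc3_p1 : ∀ {A B}, D (X.p1 : X.Hom (X.prod A B) B) = X.comp X.p1 X.p1
  cdc4 : ∀ {A B C} (f : X.Hom A B) (g : X.Hom A C),
    D (X.pair f g) = X.pair (D f) (D g)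
  cdc5 : ∀ {A B C} (f : X.Hom A B) (g : X.Hom B C),
    D (X.comp f g) = X.comp (X.pair (X.comp X.p0 f) (D f)) (D g)
  cdc6 : ∀ {C A B} (a b c : X.Hom C A) (f : X.Hom A B),
    X.comp (X.pair (X.pair a b) (X.pair X.zero c)) (D (D f)) = X.comp (X.pair a c) (D f)
  cdc7 : ∀ {C A B} (a b c d : X.Hom C A) (f : X.Hom A B),
    X.comp (X.pair (X.pair a b) (X.pair c d)) (D (D f))
      = X.comp (X.pair (X.pair a c) (X.pair b d)) (D (D f))

namespace CLACat

/-- The forward differential combinator induced by a reverse differential combinator: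
`D[f] := (⟨1,0⟩ × 1) R[R[f]] π₁`. -/
def Dof (X : CLACat) (R : ∀ {A B : X.Obj}, X.Hom A B → X.Hom (X.prod A B) A)
    {A B : X.Obj} (f : X.Hom A B) : X.Hom (X.prod A A) B :=
  X.comp (X.prodMap X.i0 (X.id A)) (X.comp (R (R f)) X.p1)

/-- The dagger induced by a reverse differential combinator: `f† := ι₁ R[f]`. -/
def dag (X : CLACat) (R : ∀ {A B : X.Obj}, X.Hom A B → X.Hom (X.prod A B) A)
    {A B : X.Obj} (f : X.Hom A B) : X.Hom B A :=
  X.comp X.i1 (R f)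

end CLACat

/-- The axioms of a Cartesian reverse differential category, for a reverse differential
combinator `R` on a Cartesian left additive category `X`. -/
structure RDCAxioms (X : CLACat)
    (R : ∀ {A B : X.Obj}, X.Hom A B → X.Hom (X.prod A B) A) : Prop where
  rd1_add : ∀ {A B} (f g : X.Hom A B), R (X.add f g) = X.add (R f) (R g)
  rd1_zero : ∀ {A B}, R (X.zero : X.Hom A B) = X.zero
  rd2_add : ∀ {C A B} (a : X.Hom C A) (b c : X.Hom C B) (f : X.Hom A B),
    X.comp (X.pair a (X.add b c)) (R f)
      = X.add (X.comp (X.pair a b) (R f)) (X.comp (X.pair a c) (R f))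
  rd2_zero : ∀ {C A B} (a : X.Hom C A) (f : X.Hom A B),
    X.comp (X.pair a X.zero) (R f) = X.zero
  rd3_id : ∀ {A}, R (X.id A) = X.p1
  rd3_p0 : ∀ {A B}, R (X.p0 : X.Hom (X.prod A B) A) = X.comp X.p1 X.i0
  rd3_p1 : ∀ {A B}, R (X.p1 : X.Hom (X.prod A B) B) = X.comp X.p1 X.i1
  rd4 : ∀ {A B C} (f : X.Hom A B) (g : X.Hom A C),
    R (X.pair f g) = X.add (X.comp (X.prodMap (X.id A) X.p0) (R f))
                           (X.comp (X.prodMap (X.id A) X.p1) (R g))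
  rd4_bang : ∀ {A}, R (X.bang A) = X.zero
  rd5 : ∀ {A B C} (f : X.Hom A B) (g : X.Hom B C),
    R (X.comp f g) = X.comp (X.pair X.p0 (X.pair (X.comp X.p0 f) X.p1))
                            (X.comp (X.prodMap (X.id A) (R g)) (R f))
  rd6 : ∀ {A B} (f : X.Hom A B),
    X.comp (X.pair (X.prodMap (X.id A) X.p0) (X.prodMap (X.zero : X.Hom A A) X.p1))
      (X.comp (X.prodMap (X.i0 : X.Hom (X.prod A B) (X.prod (X.prod A B) A)) (X.id (X.prod A B)))
        (X.comp (R (R (R f))) X.p1))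
    = X.comp (X.prodMap (X.id A) X.p1) (R f)
  rd7 : ∀ {A B} (f : X.Hom A B),
    X.Dof (fun {_ _} g => R g) (X.Dof (fun {_ _} g => R g) f)
      = X.comp X.ex (X.Dof (fun {_ _} g => R g) (X.Dof (fun {_ _} g => R g) f))

namespace CLACat
/-- a map is linear with respect to the induced differential combinator -/
def RLinear (X : CLACat) (R : ∀ {A B : X.Obj}, X.Hom A B → X.Hom (X.prod A B) A)
    {A B : X.Obj} (f : X.Hom A B) : Prop :=
  X.Dof (fun {_ _} g => R g) f = X.comp X.p1 f
end CLACat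

namespace LinDag

section
variable (X : CLACat)

theorem comp_pair {E C A B : X.Obj} (h : X.Hom E C) (f : X.Hom C A) (g : X.Hom C B) :
    X.comp h (X.pair f g) = X.pair (X.comp h f) (X.comp h g) := by
  rw [← X.pair_unique (X.comp h (X.pair f g)), X.assoc, X.assoc, X.pair_p0, X.pair_p1]

theorem zero_add' {A B : X.Obj} (f : X.Hom A B) : X.add X.zero f = f := by
  rw [X.add_comm', X.add_zero']

theorem pair_zero {C A B : X.Obj} :
    X.pair (X.zero : X.Hom C A) (X.zero : X.Hom C B) = X.zero := by
  rw [← X.pair_unique (X.zero : X.Hom C (X.prod A B)), X.zero_comp_p0, X.zero_comp_p1]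

theorem add_pair {C A B : X.Obj} (a c : X.Hom C A) (b d : X.Hom C B) :
    X.add (X.pair a b) (X.pair c d) = X.pair (X.add a c) (X.add b d) := by
  rw [← X.pair_unique (X.add (X.pair a b) (X.pair c d)), X.add_comp_p0, X.add_comp_p1]
  simp only [X.pair_p0, X.pair_p1]

theorem pair_p0_p1 {A B : X.Obj} : X.pair (X.p0 : X.Hom (X.prod A B) A) X.p1 = X.id _ := by
  have h := X.pair_unique (X.id (X.prod A B))
  rwa [X.id_comp, X.id_comp] at h

variable {X} {R : ∀ {A B : X.Obj}, X.Hom A B → X.Hom (X.prod A B) A}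

theorem R_comp (hR : RDCAxioms X (fun {_ _} f => R f))
    {E A B C : X.Obj} (e : X.Hom E (X.prod A C)) (f : X.Hom A B) (g : X.Hom B C) :
    X.comp e (R (X.comp f g)) =
      X.comp (X.pair (X.comp e X.p0)
        (X.comp (X.pair (X.comp (X.comp e X.p0) f) (X.comp e X.p1)) (R g))) (R f) := by
  have h := hR.rd5 f g
  rw [h]
  simp only [CLACat.prodMap, comp_pair, ← X.assoc, X.pair_p0, X.pair_p1, X.comp_id]

theorem R_pair (hR : RDCAxioms X (fun {_ _} f => R f))
    {E A B C : X.Obj} (e : X.Hom E (X.prod A (X.prod B C)))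
    (f : X.Hom A B) (g : X.Hom A C) :
    X.comp e (R (X.pair f g)) =
      X.add (X.comp (X.pair (X.comp e X.p0) (X.comp (X.comp e X.p1) X.p0)) (R f))
        (X.comp (X.pair (X.comp e X.p0) (X.comp (X.comp e X.p1) X.p1)) (R g)) := by
  have h := hR.rd4 f g
  rw [h]
  simp only [CLACat.prodMap, comp_pair, ← X.assoc, X.comp_id, X.comp_add]

theorem R_p0 (hR : RDCAxioms X (fun {_ _} f => R f))
    {E A B : X.Obj} (e : X.Hom E _) :
    X.comp e (R (X.p0 : X.Hom (X.prod A B) A)) = X.pair (X.comp e X.p1) X.zero := by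
  have h := hR.rd3_p0 (A := A) (B := B)
  rw [h]
  simp only [CLACat.i0, comp_pair, ← X.assoc, X.comp_id, X.comp_zero]

theorem R_p1 (hR : RDCAxioms X (fun {_ _} f => R f))
    {E A B : X.Obj} (e : X.Hom E _) :
    X.comp e (R (X.p1 : X.Hom (X.prod A B) B)) = X.pair X.zero (X.comp e X.p1) := by
  have h := hR.rd3_p1 (A := A) (B := B)
  rw [h]
  simp only [CLACat.i1, comp_pair, ← X.assoc, X.comp_id, X.comp_zero]

theorem R_id (hR : RDCAxioms X (fun {_ _} f => R f))
    {A : X.Obj} : R (X.id A) = X.p1 := hR.rd3_id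

theorem R_zero (hR : RDCAxioms X (fun {_ _} f => R f))
    {A B : X.Obj} : R (X.zero : X.Hom A B) = X.zero := hR.rd1_zero

theorem R_add_right (hR : RDCAxioms X (fun {_ _} f => R f))
    {C A B : X.Obj} (a : X.Hom C A) (f : X.Hom A B) :
    X.comp (X.pair a X.zero) (R f) = X.zero := hR.rd2_zero a f

theorem rd6_elt (hR : RDCAxioms X (fun {_ _} f => R f))
    {E A B : X.Obj} (f : X.Hom A B) (a : X.Hom E A) (b c : X.Hom E B) :
    X.comp (X.comp (X.pair (X.pair (X.pair a b) X.zero) (X.pair X.zero c)) (R (R (R f)))) X.p1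
      = X.comp (X.pair a c) (R f) := by
  have h := congrArg (fun k => X.comp (X.pair a (X.pair b c)) k) (hR.rd6 f)
  simpa only [CLACat.prodMap, CLACat.i0, comp_pair, ← X.assoc, X.pair_p0, X.pair_p1, X.comp_id,
    X.comp_zero] using h

theorem R_lin (hR : RDCAxioms X (fun {_ _} f => R f))
    {E A B : X.Obj} (f : X.Hom A B) (hf : X.RLinear (fun {_ _} g => R g) f)
    (a : X.Hom E A) (b : X.Hom E B) :
    X.comp (X.pair a b) (R f) = X.comp (X.pair X.zero b) (R f) := by
  have h := congrArg (fun k => X.comp (X.pair (X.pair a X.zero) b) (X.comp (R k) X.p1)) hf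
  simpa only [CLACat.Dof, CLACat.prodMap, CLACat.i0, comp_pair, ← X.assoc, X.pair_p0, X.pair_p1,
    X.comp_id, X.id_comp, X.comp_zero, R_comp hR, R_pair hR, R_p0 hR, R_p1 hR, R_id hR, R_zero hR,
    add_pair, X.add_zero', zero_add', pair_zero, X.zero_comp_p0, X.zero_comp_p1,
    rd6_elt hR] using h

theorem R_eq (hR : RDCAxioms X (fun {_ _} f => R f))
    {A B : X.Obj} (f : X.Hom A B) (hf : X.RLinear (fun {_ _} g => R g) f) :
    R f = X.comp X.p1 (X.dag (fun {_ _} g => R g) f) := by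
  have h := R_lin hR f hf X.p0 X.p1
  rw [pair_p0_p1, X.id_comp] at h
  rw [h]
  simp only [CLACat.dag, CLACat.i1, ← X.assoc, comp_pair, X.comp_zero, X.comp_id]

theorem dag_dag (hR : RDCAxioms X (fun {_ _} f => R f))
    {A B : X.Obj} (f : X.Hom A B) (hf : X.RLinear (fun {_ _} g => R g) f) :
    X.dag (fun {_ _} g => R g) (X.dag (fun {_ _} g => R g) f) = f := by
  have h := congrArg (fun k => X.comp (X.pair X.zero (X.id A)) k) hf
  simp only [CLACat.Dof] at h
  rw [R_eq hR f hf] at h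
  generalize X.dag (fun {_ _} g => R g) f = g at h ⊢
  simpa only [CLACat.dag, CLACat.i1, CLACat.prodMap, CLACat.i0, comp_pair, ← X.assoc, X.pair_p0,
    X.pair_p1, X.comp_id, X.id_comp, X.comp_zero, R_comp hR, R_p1 hR] using h

theorem dag_lin (hR : RDCAxioms X (fun {_ _} f => R f))
    {A B : X.Obj} (f : X.Hom A B) (hf : X.RLinear (fun {_ _} g => R g) f) :
    X.RLinear (fun {_ _} g => R g) (X.dag (fun {_ _} g => R g) f) := by
  have h := rd6_elt hR f (X.zero : X.Hom (X.prod B B) A) X.p0 X.p1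
  rw [R_eq hR f hf] at h
  unfold CLACat.RLinear
  generalize X.dag (fun {_ _} g => R g) f = g at h ⊢
  have e : R (X.comp (X.p1 : X.Hom (X.prod A B) B) g)
      = X.pair X.zero (X.comp (X.pair (X.comp X.p0 X.p1) X.p1) (R g)) := by
    rw [← X.id_comp (R (X.comp (X.p1 : X.Hom (X.prod A B) B) g)), R_comp hR]
    simp only [R_p1 hR, X.id_comp, X.pair_p1]
  rw [e] at h
  simpa only [CLACat.Dof, CLACat.prodMap, CLACat.i0, comp_pair, ← X.assoc, X.pair_p0, X.pair_p1,
    X.comp_id, X.id_comp, X.comp_zero, R_comp hR, R_pair hR, R_p0 hR, R_p1 hR, R_id hR, R_zero hR,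
    add_pair, X.add_zero', zero_add', pair_zero, X.zero_comp_p0, X.zero_comp_p1] using h

theorem dag_comp (hR : RDCAxioms X (fun {_ _} f => R f))
    {A B C : X.Obj} (f : X.Hom A B) (g : X.Hom B C)
    (hg : X.RLinear (fun {_ _} g => R g) g) :
    X.dag (fun {_ _} g => R g) (X.comp f g)
      = X.comp (X.dag (fun {_ _} g => R g) g) (X.dag (fun {_ _} g => R g) f) := by
  simp only [CLACat.dag, CLACat.i1, R_comp hR, X.pair_p0, X.pair_p1, ← X.assoc, comp_pair,
    X.comp_zero, X.comp_id]
  rw [R_lin hR g hg]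

end

end LinDag

/-- for a Cartesian reverse differential category `X`, the operation
`f ↦ f† := ι₁ R[f]` restricted to the subcategory `Lin(X)` of linear maps is a
contravariant involutive identity-on-objects functor, making `Lin(X)` a dagger category
with dagger biproducts (`πᵢ† = ιᵢ`).  In particular, for linear `f : A → B` and linear
`g : B → C`, `(fg)† = g† f†`, `1† = 1` and `f†† = f`. -/
theorem lin_dagger_category (X : CLACat)
    (R : ∀ {A B : X.Obj}, X.Hom A B → X.Hom (X.prod A B) A)
    (hR : RDCAxioms X (fun {_ _} f => R f)) :
    -- dagger is well defined on Lin(X)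
    (∀ {A B : X.Obj} (f : X.Hom A B), X.RLinear (fun {_ _} g => R g) f →
      X.RLinear (fun {_ _} g => R g) (X.dag (fun {_ _} g => R g) f)) ∧
    -- contravariant functor
    (∀ {A : X.Obj}, X.dag (fun {_ _} g => R g) (X.id A) = X.id A) ∧
    (∀ {A B C : X.Obj} (f : X.Hom A B) (g : X.Hom B C),
      X.RLinear (fun {_ _} g => R g) f → X.RLinear (fun {_ _} g => R g) g →
        X.dag (fun {_ _} g => R g) (X.comp f g)
          = X.comp (X.dag (fun {_ _} g => R g) g) (X.dag (fun {_ _} g => R g) f)) ∧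
    -- involutive on linear maps
    (∀ {A B : X.Obj} (f : X.Hom A B), X.RLinear (fun {_ _} g => R g) f →
      X.dag (fun {_ _} g => R g) (X.dag (fun {_ _} g => R g) f) = f) ∧
    -- dagger biproducts: πᵢ† = ιᵢ
    (∀ {A B : X.Obj}, X.dag (fun {_ _} g => R g) (X.p0 : X.Hom (X.prod A B) A) = X.i0) ∧
    (∀ {A B : X.Obj}, X.dag (fun {_ _} g => R g) (X.p1 : X.Hom (X.prod A B) B) = X.i1) := by
  refine ⟨fun f hf => LinDag.dag_lin hR f hf, ?_, fun f g _ hg => LinDag.dag_comp hR f g hg,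
    fun f hf => LinDag.dag_dag hR f hf, ?_, ?_⟩
  · intro A
    simp only [CLACat.dag, CLACat.i1, LinDag.R_id hR, X.pair_p1]
  · intro A B
    simp only [CLACat.dag, CLACat.i1, CLACat.i0, LinDag.R_p0 hR, X.pair_p1]
  · intro A B
    simp only [CLACat.dag, CLACat.i1, LinDag.R_p1 hR, X.pair_p1]
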